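/- arXiv:1605.02485 — 2 statements merged into one kernel-verified Lean document; each statement's English description precedes it below -/
import Mathlib

section
/- Let T : ℍⁿ ⇉ V₁ be a maximal H-monotone set-valued map with dom(T) = ℍⁿ. Then for every η ∈ ℍⁿ and every λ > 0, the map (ξ₁ + λT) restricted to the horizontal plane H_η is surjective onto V₁: for every p ∈ ℝ²ⁿ there exist ζ ∈ H_η and v ∈ T(ζ) such that p = ξ₁(ζ) + λ v. -/
open scoped RealInnerProductSpace Pointwise

noncomputable section

abbrev E (n : ℕ) := EuclideanSpace ℝ (Fin n)
abbrev Heis (n : ℕ) := E n × E n × ℝ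
abbrev V1 (n : ℕ) := WithLp 2 (E n × E n)

/-- The projection ξ₁(x,y,t) = (x,y) onto the first layer V₁ ≅ ℝ²ⁿ. -/
def xi1 {n : ℕ} (η : Heis n) : V1 n := (WithLp.equiv 2 (E n × E n)).symm (η.1, η.2.1)

/-- The horizontal plane through η₀. -/
def Hplane {n : ℕ} (η₀ : Heis n) : Set (Heis n) :=
  {η | η.2.2 = η₀.2.2 + 2 * (⟪η₀.2.1, η.1⟫ - ⟪η₀.1, η.2.1⟫)}

/-- H-monotonicity of a set-valued map T : ℍⁿ ⇉ V₁. -/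
def IsHMonotone {n : ℕ} (T : Heis n → Set (V1 n)) : Prop :=
  ∀ η η', η' ∈ Hplane η → ∀ v ∈ T η, ∀ v' ∈ T η', 0 ≤ ⟪v - v', xi1 η - xi1 η'⟫

/-- Maximal H-monotonicity. -/
def IsMaximalHMonotone {n : ℕ} (T : Heis n → Set (V1 n)) : Prop :=
  IsHMonotone T ∧
    ∀ η v, (∀ η' ∈ Hplane η, ∀ v' ∈ T η', 0 ≤ ⟪v - v', xi1 η - xi1 η'⟫) → v ∈ T η

/-- Heisenberg group law. -/
def hmul {n : ℕ} (η η' : Heis n) : Heis n :=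
  (η.1 + η'.1, η.2.1 + η'.2.1,
    η.2.2 + η'.2.2 + 2 * (⟪η'.1, η.2.1⟫ - ⟪η.1, η'.2.1⟫))

/-- Heisenberg group inverse. -/
def hinv {n : ℕ} (η : Heis n) : Heis n := (-η.1, -η.2.1, -η.2.2)

/-- The Korányi gauge N(x,y,t) = ((‖x‖²+‖y‖²)² + t²)^(1/4). -/
def gaugeN {n : ℕ} (η : Heis n) : ℝ :=
  ((‖η.1‖ ^ 2 + ‖η.2.1‖ ^ 2) ^ 2 + η.2.2 ^ 2) ^ ((1 : ℝ) / 4)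

/-- The Korányi–Cygan distance d_H(η,η') = N(η'⁻¹ ∘ η). -/
def dH {n : ℕ} (η η' : Heis n) : ℝ := gaugeN (hmul (hinv η') η)

open Filter Topology MeasureTheory Metric Set
open scoped NNReal ENNReal

/- Along the horizontal plane through `p`, write `S w` for the values of `T` at the point over
`p.1 + w`. We need `λ⁻¹ (x - p.1 - w) ∈ S w` for some `w`. Otherwise Hahn–Banach and a partition of
unity give a `C¹` field `g` with `⟪v - λ⁻¹ (x - p.1 - w), g w⟫ > 0` for all `v ∈ S w`, and
monotonicity against a value of `T` at `p` lets us take `g w = w` for `w` large. Such a field must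
vanish somewhere, which is absurd. This uses that `S` is upper hemicontinuous with closed convex
values; closedness of the graph and local boundedness are where the geometry enters. Points that are
not on a common horizontal plane are not comparable, but since the form is nondegenerate, a point
reached from `p` by two horizontal steps is also reached from every nearby point by two steps with
nearby directions, and monotonicity along these steps replaces the missing comparison.

That `g` vanishes is the no-retraction theorem for a `C¹` map `r` of the ball onto the sphere fixing
the sphere: with `h = r - id`, the integral over the ball of `det (1 + t • fderiv h)` is a
polynomial in `t` equal to the volume of the ball for small `t > 0`, hence also at `t = 1`, where
the determinant vanishes. -/

section Determinant

open Polynomial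

theorem exists_polynomial_eval_eq_det_one_add_smul {K M : Type*} [Field K] [AddCommGroup M]
    [Module K M] [FiniteDimensional K M] (A : M →ₗ[K] M) :
    ∃ q : K[X], q.natDegree ≤ Module.finrank K M ∧
      ∀ t, q.eval t = LinearMap.det (1 + t • A) := by
  classical
  let b := Module.finBasis K M
  let N := LinearMap.toMatrix b b A
  refine ⟨((X : K[X]) • N.map C + (1 : Matrix _ _ K).map C).det, ?_, fun t => ?_⟩
  · simpa using natDegree_det_X_add_C_le N 1
  · rw [← LinearMap.det_toMatrix b, map_add, map_smul, LinearMap.toMatrix_one,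
      ← coe_evalRingHom, RingHom.map_det]
    congr 1
    ext i j
    simp only [N, RingHom.mapMatrix_apply, Matrix.map_apply, Matrix.add_apply, Matrix.smul_apply,
      smul_eq_mul, coe_evalRingHom, eval_add, eval_mul, eval_X, eval_C, add_comm]

theorem exists_finset_det_one_add_eq_sum {K : Type*} (M : Type*) [Field K] [AddCommGroup M]
    [Module K M] [FiniteDimensional K M] {S : Set K} (hS : S.Infinite) :
    ∃ (s : Finset K) (c : K → K), ↑s ⊆ S ∧ ∀ A : M →ₗ[K] M,
      LinearMap.det (1 + A) = ∑ t ∈ s, c t * LinearMap.det (1 + t • A) := by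
  classical
  obtain ⟨s, hsS, hs⟩ := hS.exists_subset_card_eq (Module.finrank K M + 1)
  refine ⟨s, fun t => (Lagrange.basis s id t).eval 1, hsS, fun A => ?_⟩
  obtain ⟨q, hdeg, hq⟩ := exists_polynomial_eval_eq_det_one_add_smul A
  have hlt : q.degree < s.card := degree_le_natDegree.trans_lt (by exact_mod_cast (by omega))
  calc LinearMap.det (1 + A) = q.eval 1 := by rw [hq, one_smul]
    _ = (Lagrange.interpolate s id fun t => q.eval t).eval 1 :=
      congrArg (eval 1) (Lagrange.eq_interpolate (injOn_id _) hlt)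
    _ = _ := by
      simp only [Lagrange.interpolate_apply, eval_finsetSum, eval_mul, eval_C, hq, mul_comm]

end Determinant

section Volume

variable {W : Type*} [NormedAddCommGroup W] [NormedSpace ℝ W]

theorem bijective_id_add_of_lipschitzWith [CompleteSpace W] {K : ℝ≥0} {h : W → W}
    (hh : LipschitzWith K h) (hK : K < 1) : Function.Bijective fun x => x + h x := by
  have happrox : ApproximatesLinearOn (fun x => x + h x)
      (ContinuousLinearEquiv.refl ℝ W : W →L[ℝ] W) univ K := by
    refine LipschitzOnWith.approximatesLinearOn ?_
    convert hh.lipschitzOnWith using 1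
    ext x
    simp
  have hc : Subsingleton W ∨ K < ‖((ContinuousLinearEquiv.refl ℝ W).symm : W →L[ℝ] W)‖₊⁻¹ := by
    refine (subsingleton_or_nontrivial W).imp_right fun hW => ?_
    have := EMetric.nontrivial_iff_nontrivialTopology.1 hW
    change K < ‖ContinuousLinearMap.id ℝ W‖₊⁻¹
    rwa [ContinuousLinearMap.nnnorm_id, inv_one]
  exact ⟨injOn_univ.1 (happrox.injOn hc), happrox.surjective hc⟩

variable [FiniteDimensional ℝ W]

theorem det_one_add_pos {A : W →L[ℝ] W} (hA : ‖A‖ < 1) : 0 < (1 + A).det := by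
  have hcont : Continuous fun s : ℝ => (1 + s • A).det :=
    ContinuousLinearMap.continuous_det.comp (by fun_prop)
  have hne : ∀ s ∈ Icc (0 : ℝ) 1, (1 + s • A).det ≠ 0 := by
    intro s hs
    have hnorm : ‖-(s • A)‖ < 1 := by
      rw [norm_neg, norm_smul, Real.norm_of_nonneg hs.1]
      exact (mul_le_of_le_one_left (norm_nonneg A) hs.2).trans_lt hA
    have hunit : IsUnit (1 + s • A) := by
      simpa only [sub_neg_eq_add] using isUnit_one_sub_of_norm_lt_one hnorm
    exact ((hunit.map ContinuousLinearMap.toLinearMapRingHom).map LinearMap.det).ne_zero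
  by_contra hneg
  obtain ⟨s, hs, hs0⟩ := intermediate_value_Icc' zero_le_one hcont.continuousOn
    (show (0 : ℝ) ∈ Icc _ _ from ⟨by simpa using hneg, by simp [ContinuousLinearMap.det]⟩)
  exact hne s hs hs0

variable [MeasurableSpace W] [BorelSpace W] (μ : Measure W) {K : ℝ≥0} {h : W → W} {s : Set W}

theorem integrableOn_det_one_add_smul_fderiv (hh : LipschitzWith K h) (hs : μ s ≠ ∞) (t : ℝ) :
    IntegrableOn (fun x => (1 + t • fderiv ℝ h x).det) s μ := by
  have hcont : Continuous fun A : W →L[ℝ] W => (1 + t • A).det :=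
    ContinuousLinearMap.continuous_det.comp (by fun_prop)
  obtain ⟨C, hC⟩ := (isCompact_closedBall (0 : W →L[ℝ] W) K).exists_bound_of_continuousOn
    hcont.continuousOn
  refine Measure.integrableOn_of_bounded hs
    (hcont.measurable.comp (measurable_fderiv ℝ h)).aestronglyMeasurable
    (M := C) (ae_of_all _ fun x => hC _ ?_)
  simpa using norm_fderiv_le_of_lipschitz ℝ hh

variable [μ.IsAddHaarMeasure]

theorem setIntegral_det_one_add_fderiv_of_lt_one (hh : LipschitzWith K h) (hK : K < 1)
    (hs : MeasurableSet s) (hzero : ∀ x ∉ s, h x = 0) (hd : ∀ x ∈ s, DifferentiableAt ℝ h x) :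
    ∫ x in s, (1 + fderiv ℝ h x).det ∂μ = μ.real s := by
  have hbij : Function.Bijective fun x => x + h x := bijective_id_add_of_lipschitzWith hh hK
  have hcompl : (fun x => x + h x) '' sᶜ = sᶜ := by
    rw [image_congr fun x hx => by rw [hzero x hx, add_zero], image_id']
  have himage : (fun x => x + h x) '' s = s := by
    rw [← compl_inj_iff, ← image_compl_eq hbij, hcompl]
  have hderiv : ∀ x ∈ s, HasFDerivWithinAt (fun x => x + h x) (1 + fderiv ℝ h x) s x :=
    fun x hx => ((hasFDerivAt_id x).add (hd x hx).hasFDerivAt).hasFDerivWithinAt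
  calc ∫ x in s, (1 + fderiv ℝ h x).det ∂μ
      = ∫ x in s, |(1 + fderiv ℝ h x).det| • (1 : ℝ) ∂μ := by
        refine setIntegral_congr_fun hs fun x _ => ?_
        have hnorm : ‖fderiv ℝ h x‖ < 1 := (norm_fderiv_le_of_lipschitz ℝ hh).trans_lt hK
        rw [smul_eq_mul, mul_one, abs_of_pos (det_one_add_pos hnorm)]
    _ = ∫ _ in (fun x => x + h x) '' s, (1 : ℝ) ∂μ :=
        (integral_image_eq_integral_abs_det_fderiv_smul μ hs hderiv hbij.injective.injOn
          fun _ => 1).symm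
    _ = μ.real s := by simp [himage]

theorem setIntegral_det_one_add_fderiv (hh : LipschitzWith K h)
    (hs : MeasurableSet s) (hs' : μ s ≠ ∞) (hzero : ∀ x ∉ s, h x = 0)
    (hd : ∀ x ∈ s, DifferentiableAt ℝ h x) :
    ∫ x in s, (1 + fderiv ℝ h x).det ∂μ = μ.real s := by
  have hK : (0 : ℝ) < (K + 1)⁻¹ := by positivity
  obtain ⟨S, c, hS, hdet⟩ := exists_finset_det_one_add_eq_sum W (Ioo_infinite hK)
  have hsmall : ∀ t ∈ S, ∫ x in s, (1 + t • fderiv ℝ h x).det ∂μ = μ.real s := by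
    intro t ht
    have hlt : ‖t‖₊ * K < 1 := by
      obtain ⟨ht0, htK⟩ := hS ht
      rw [← NNReal.coe_lt_coe, NNReal.coe_mul, coe_nnnorm, Real.norm_of_nonneg ht0.le]
      calc t * K ≤ t * (K + 1) := by gcongr; exact le_add_of_nonneg_right zero_le_one
        _ < 1 := (lt_inv_mul_iff₀' (by positivity)).1 (by rwa [mul_one])
    rw [← setIntegral_det_one_add_fderiv_of_lt_one μ ((lipschitzWith_smul t).comp hh) hlt hs
      (fun x hx => by simp [hzero x hx]) (fun x hx => (hd x hx).const_smul t)]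
    refine setIntegral_congr_fun hs fun x hx => ?_
    change (1 + t • fderiv ℝ h x).det = (1 + fderiv ℝ (t • h) x).det
    rw [fderiv_const_smul (hd x hx)]
  have hsum : ∑ t ∈ S, c t = 1 := by simpa using (hdet 0).symm
  calc ∫ x in s, (1 + fderiv ℝ h x).det ∂μ
      = ∫ x in s, ∑ t ∈ S, c t * (1 + t • fderiv ℝ h x).det ∂μ :=
        integral_congr_ae (ae_of_all _ fun x => hdet (fderiv ℝ h x))
    _ = ∑ t ∈ S, c t * μ.real s := by
        rw [integral_finsetSum _ fun t _ =>
          (integrableOn_det_one_add_smul_fderiv μ hh hs' t).const_mul (c t)]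
        exact Finset.sum_congr rfl fun t ht => by rw [integral_const_mul, hsmall t ht]
    _ = μ.real s := by rw [← Finset.sum_mul, hsum, one_mul]

end Volume

section NoRetraction

theorem exists_mem_segment_mem_frontier {W : Type*} [AddCommGroup W] [TopologicalSpace W]
    [ContinuousAdd W] [Module ℝ W] [ContinuousSMul ℝ W] {s : Set W} {x y : W}
    (hx : x ∈ s) (hy : y ∉ s) : ∃ z ∈ segment ℝ x y, z ∈ frontier s := by
  have hconn : IsPreconnected (segment ℝ x y) := (convex_segment x y).isPreconnected
  obtain ⟨z, hz, hz'⟩ := isPreconnected_closed_iff.1 hconn (closure s) (closure sᶜ)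
    isClosed_closure isClosed_closure
    (by rw [← closure_union, union_compl_self, closure_univ]; exact subset_univ _)
    ⟨x, left_mem_segment ℝ x y, subset_closure hx⟩ ⟨y, right_mem_segment ℝ x y, subset_closure hy⟩
  exact ⟨z, hz, frontier_eq_closure_inter_closure (s := s) ▸ hz'⟩

theorem lipschitzWith_indicator {W W' : Type*} [NormedAddCommGroup W] [NormedSpace ℝ W]
    [NormedAddCommGroup W'] {K : ℝ≥0} {s : Set W} {f : W → W'} (hs : IsClosed s)
    (hf : LipschitzOnWith K f s) (hzero : ∀ x ∈ frontier s, f x = 0) :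
    LipschitzWith K (s.indicator f) := by
  have hcross : ∀ {x y}, x ∈ s → y ∉ s → dist (f x) 0 ≤ K * dist x y := by
    intro x y hx hy
    obtain ⟨z, hz, hzs⟩ := exists_mem_segment_mem_frontier hx hy
    calc dist (f x) 0 = dist (f x) (f z) := by rw [hzero z hzs]
      _ ≤ K * dist x z := hf.dist_le_mul x hx z (hs.frontier_subset hzs)
      _ ≤ K * dist x y := by
        gcongr
        linarith [dist_add_dist_of_mem_segment hz, dist_nonneg (x := z) (y := y)]
  refine LipschitzWith.of_dist_le_mul fun x y => ?_
  by_cases hx : x ∈ s <;> by_cases hy : y ∈ s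
  · simpa only [indicator_of_mem, hx, hy] using hf.dist_le_mul x hx y hy
  · simpa only [indicator_of_mem hx, indicator_of_notMem hy] using hcross hx hy
  · simpa only [indicator_of_notMem hx, indicator_of_mem hy, dist_comm] using hcross hy hx
  · simp only [indicator_of_notMem hx, indicator_of_notMem hy, dist_self]
    positivity

variable {W : Type*} [NormedAddCommGroup W] [InnerProductSpace ℝ W] [FiniteDimensional ℝ W]

theorem det_eq_zero_of_norm_eventuallyEq {r : W → W} {A : W →L[ℝ] W} {x : W} {R : ℝ}
    (hr : HasFDerivAt r A x) (hR : R ≠ 0) (hnorm : ∀ᶠ y in 𝓝 x, ‖r y‖ = R) : A.det = 0 := by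
  by_contra hdet
  have hunit : IsUnit (LinearMap.det (A : W →ₗ[ℝ] W)) := isUnit_iff_ne_zero.2 hdet
  obtain ⟨y, hy⟩ := (LinearMap.equivOfIsUnitDet hunit).surjective (r x)
  rw [LinearMap.equivOfIsUnitDet_apply, ContinuousLinearMap.coe_coe] at hy
  have hconst : (fun z => ‖r z‖ ^ 2) =ᶠ[𝓝 x] fun _ => R ^ 2 := hnorm.mono fun z hz => by simp [hz]
  have horth : 2 • ⟪r x, A y⟫ = 0 := by
    simpa using DFunLike.congr_fun
      (hr.norm_sq.unique ((hasFDerivAt_const (R ^ 2) x).congr_of_eventuallyEq hconst)) y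
  rw [hy, real_inner_self_eq_norm_sq, hnorm.self_of_nhds] at horth
  exact hR (by simpa using horth)

theorem exists_mem_sphere_apply_ne {R : ℝ} (hR : 0 < R) {r : W → W} {K : ℝ≥0}
    (hlip : LipschitzOnWith K r (closedBall 0 R)) (hdiff : DifferentiableOn ℝ r (ball 0 R))
    (hnorm : ∀ x ∈ ball 0 R, ‖r x‖ = R) : ∃ x ∈ sphere 0 R, r x ≠ x := by
  by_contra! hid
  borelize W
  let k : W → W := r - id
  let h : W → W := (closedBall 0 R).indicator k
  have hh : LipschitzWith (K + 1) h := by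
    refine lipschitzWith_indicator isClosed_closedBall (hlip.sub LipschitzWith.id.lipschitzOnWith)
      fun x hx => ?_
    rw [frontier_closedBall _ hR.ne'] at hx
    simp [k, hid x hx]
  have hderiv : ∀ x ∈ ball 0 R, HasFDerivAt h (fderiv ℝ r x - 1) x := by
    intro x hx
    have hball : ball (0 : W) R ∈ 𝓝 x := isOpen_ball.mem_nhds hx
    refine ((hdiff.differentiableAt hball).hasFDerivAt.sub (hasFDerivAt_id x)).congr_of_eventuallyEq
      ?_
    filter_upwards [hball] with y hy
    simp [h, k, indicator_of_mem (ball_subset_closedBall hy)]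
  have hdet : ∀ x ∈ ball 0 R, (1 + fderiv ℝ h x).det = 0 := by
    intro x hx
    have hball : ball (0 : W) R ∈ 𝓝 x := isOpen_ball.mem_nhds hx
    rw [(hderiv x hx).fderiv, add_sub_cancel]
    exact det_eq_zero_of_norm_eventuallyEq (hdiff.differentiableAt hball).hasFDerivAt hR.ne'
      (mem_of_superset hball hnorm)
  have hzero : ∀ x ∉ ball 0 R, h x = 0 := by
    intro x hx
    by_cases hx' : x ∈ closedBall 0 R
    · have : x ∈ sphere 0 R := by
        rw [← closedBall_sdiff_ball]
        exact ⟨hx', hx⟩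
      simp [h, k, hx', hid x this]
    · exact indicator_of_notMem hx' k
  have hvol : (0 : ℝ) = volume.real (ball (0 : W) R) := by
    rw [← setIntegral_det_one_add_fderiv volume hh measurableSet_ball measure_ball_lt_top.ne hzero
      fun x hx => (hderiv x hx).differentiableAt,
      setIntegral_congr_fun measurableSet_ball hdet, integral_zero]
  exact hvol.not_lt (ENNReal.toReal_pos (measure_ball_pos volume _ hR).ne' measure_ball_lt_top.ne)

theorem exists_eq_zero_of_eq_id_on_sphere {R : ℝ} (hR : 0 < R) {g : W → W}
    (hg : ContDiffOn ℝ 1 g (closedBall 0 R)) (hid : ∀ x ∈ sphere 0 R, g x = x) :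
    ∃ x ∈ closedBall 0 R, g x = 0 := by
  by_contra! hne
  have hr : ContDiffOn ℝ 1 (fun x => (R * ‖g x‖⁻¹) • g x) (closedBall 0 R) :=
    (contDiffOn_const.mul ((hg.norm ℝ hne).inv fun x hx => norm_ne_zero_iff.2 (hne x hx))).smul hg
  obtain ⟨K, hK⟩ := hr.exists_lipschitzOnWith one_ne_zero (convex_closedBall 0 R)
    (isCompact_closedBall 0 R)
  obtain ⟨x, hx, hrx⟩ := exists_mem_sphere_apply_ne hR hK
    ((hr.differentiableOn one_ne_zero).mono ball_subset_closedBall) fun x hx => by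
      have hgx := norm_ne_zero_iff.2 (hne x (ball_subset_closedBall hx))
      rw [norm_smul, norm_mul, norm_inv, norm_norm, Real.norm_of_nonneg hR.le,
        inv_mul_cancel_right₀ hgx]
  refine hrx ?_
  rw [hid x hx, mem_sphere_zero_iff_norm.1 hx, mul_inv_cancel₀ hR.ne', one_smul]

end NoRetraction

section SetValued

theorem upperHemicontinuous_of_isClosed_graph {X Y : Type*} [TopologicalSpace X]
    [TopologicalSpace Y] {F : X → Set Y} (hclosed : IsClosed {q : X × Y | q.2 ∈ F q.1})
    (hcompact : ∀ x, ∃ C, IsCompact C ∧ ∀ᶠ x' in 𝓝 x, F x' ⊆ C) : UpperHemicontinuous F := by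
  refine upperHemicontinuous_iff_forall_isOpen.2 fun x U hU hFU => ?_
  obtain ⟨C, hC, hFC⟩ := hcompact x
  have hdisj : ∀ y ∈ C \ U, ∀ᶠ q : X × Y in 𝓝 (x, y), q.2 ∉ F q.1 := fun y hy =>
    hclosed.isOpen_compl.mem_nhds fun hyF => hy.2 (hFU hyF)
  filter_upwards [hFC, (hC.diff hU).eventually_forall_of_forall_eventually
    (P := fun x' y => y ∉ F x') hdisj] with x' hx'C hx' y hy
  by_contra hyU
  exact hx' y ⟨hx'C hy, hyU⟩ hy

variable {W : Type*} [NormedAddCommGroup W] [InnerProductSpace ℝ W]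

theorem convex_setOf_forall_inner_sub_pos (S : Set W) (a : W) :
    Convex ℝ {e | ∀ v ∈ S, 0 < ⟪v - a, e⟫} := by
  have : {e | ∀ v ∈ S, 0 < ⟪v - a, e⟫} = ⋂ v ∈ S, {e | 0 < innerₛₗ ℝ (v - a) e} := by
    ext
    simp only [mem_iInter, mem_ofPred_eq, innerₛₗ_apply_apply]
  rw [this]
  exact convex_iInter₂ fun v _ => convex_halfSpace_gt (innerₛₗ ℝ (v - a)).isLinear 0

theorem exists_eventually_forall_inner_sub_pos [CompleteSpace W] {X : Type*} [TopologicalSpace X]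
    {S : X → Set W} {a : X → W} {x : X} (hS : UpperHemicontinuousAt S x) (ha : ContinuousAt a x)
    (hclosed : IsClosed (S x)) (hconv : Convex ℝ (S x)) (hx : a x ∉ S x) :
    ∃ e, ∀ᶠ x' in 𝓝 x, ∀ v ∈ S x', 0 < ⟪v - a x', e⟫ := by
  obtain ⟨f, u, hu, hf⟩ := geometric_hahn_banach_point_closed hconv hclosed hx
  refine ⟨(InnerProductSpace.toDual ℝ W).symm f, ?_⟩
  filter_upwards [(f.continuous.continuousAt.comp ha).eventually_lt_const hu,
    upperHemicontinuousAt_iff_forall_isOpen.1 hS {v | u < f v}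
      (isOpen_lt continuous_const f.continuous) hf] with x' hax' hSx' v hv
  rw [real_inner_comm, InnerProductSpace.toDual_symm_apply, map_sub, sub_pos]
  exact hax'.trans (hSx' hv)

theorem exists_mem_of_inner_sub_pos [FiniteDimensional ℝ W] {S : W → Set W} {a : W → W} {R : ℝ}
    (hS : UpperHemicontinuous S) (ha : Continuous a) (hclosed : ∀ y, IsClosed (S y))
    (hconv : ∀ y, Convex ℝ (S y)) (hne : ∀ y, (S y).Nonempty)
    (hpos : ∀ y, R < ‖y‖ → ∀ v ∈ S y, 0 < ⟪v - a y, y⟫) : ∃ y, a y ∈ S y := by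
  by_contra! hzero
  set R' : ℝ := max R 0 + 1
  have hR' : 0 < R' := by positivity
  have hRR' : R < R' := by linarith [le_max_left R 0]
  let t : W → Set W := fun y => {e | ∀ v ∈ S y, 0 < ⟪v - a y, e⟫} ∩ {e | R' ≤ ‖y‖ → e = y}
  have htconv : ∀ y, Convex ℝ (t y) := by
    refine fun y => (convex_setOf_forall_inner_sub_pos (S y) (a y)).inter ?_
    by_cases hy : R' ≤ ‖y‖
    · simp [hy]
    · simp [hy, convex_univ]
  have hlocal : ∀ y, ∃ U ∈ 𝓝 y, ∃ g : W → W,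
      ContMDiffOn (modelWithCornersSelf ℝ W) (modelWithCornersSelf ℝ W) 1 g U ∧
        ∀ y' ∈ U, g y' ∈ t y' := by
    intro y
    by_cases hy : R' ≤ ‖y‖
    · exact ⟨{y' | R < ‖y'‖}, (isOpen_lt continuous_const continuous_norm).mem_nhds
        (hRR'.trans_le hy), id, contMDiffOn_id, fun y' hy' => ⟨hpos y' hy', fun _ => rfl⟩⟩
    · obtain ⟨e, he⟩ := exists_eventually_forall_inner_sub_pos (hS y) ha.continuousAt (hclosed y)
        (hconv y) (hzero y)
      have hnorm : ∀ᶠ y' in 𝓝 y, ‖y'‖ < R' :=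
        continuous_norm.continuousAt.eventually_lt_const (not_le.1 hy)
      exact ⟨_, he.and hnorm, fun _ => e, contMDiffOn_const,
        fun y' hy' => ⟨hy'.1, fun h => absurd h hy'.2.not_ge⟩⟩
  obtain ⟨g, hg⟩ := exists_contMDiffMap_forall_mem_convex_of_local (n := 1)
    (modelWithCornersSelf ℝ W) htconv hlocal
  obtain ⟨y, -, hgy⟩ := exists_eq_zero_of_eq_id_on_sphere hR' g.contMDiff.contDiff.contDiffOn
    fun x hx => (hg x).2 (mem_sphere_zero_iff_norm.1 hx).ge
  obtain ⟨v, hv⟩ := hne y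
  simpa [hgy] using (hg y).1 v hv

end SetValued

section InnerLimits

open Bornology

theorem exists_tendsto_of_eventually_norm_le {W : Type*} [SeminormedAddCommGroup W]
    [ProperSpace W] {ι : Type*} {U : Ultrafilter ι} {f : ι → W} {M : ℝ}
    (hf : ∀ᶠ i in (U : Filter ι), ‖f i‖ ≤ M) : ∃ x, Tendsto f U (𝓝 x) := by
  obtain ⟨x, -, hx⟩ := (isCompact_closedBall (0 : W) M).ultrafilter_le_nhds (U.map f)
    (le_principal_iff.2 (hf.mono fun i hi => mem_closedBall_zero_iff.2 hi))
  exact ⟨x, hx⟩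

theorem exists_norm_eq_one_tendsto_inv_norm_smul {W : Type*} [NormedAddCommGroup W]
    [NormedSpace ℝ W] [ProperSpace W] {ι : Type*} {U : Ultrafilter ι} {f : ι → W}
    (hf : Tendsto f U (cobounded W)) :
    ∃ u, ‖u‖ = 1 ∧ Tendsto (fun i => ‖f i‖⁻¹ • f i) U (𝓝 u) := by
  have hnorm : ∀ᶠ i in (U : Filter ι), ‖‖f i‖⁻¹ • f i‖ = 1 := by
    filter_upwards [(tendsto_norm_atTop_iff_cobounded.2 hf).eventually_gt_atTop 0] with i hi
    rw [norm_smul, norm_inv, norm_norm, inv_mul_cancel₀ hi.ne']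
  obtain ⟨u, hu⟩ := exists_tendsto_of_eventually_norm_le (hnorm.mono fun _ => le_of_eq)
  exact ⟨u, tendsto_nhds_unique (hu.norm.congr' hnorm) tendsto_const_nhds, hu⟩

variable {W : Type*} [NormedAddCommGroup W] [InnerProductSpace ℝ W] {ι : Type*} {l : Filter ι}
  {f g : ι → W} {u w : W}

theorem tendsto_inner_atTop_of_inner_pos (hf : Tendsto f l (cobounded W))
    (hu : Tendsto (fun i => ‖f i‖⁻¹ • f i) l (𝓝 u)) (hg : Tendsto g l (𝓝 w)) (huw : 0 < ⟪u, w⟫) :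
    Tendsto (fun i => ⟪f i, g i⟫) l atTop := by
  have hnorm := tendsto_norm_atTop_iff_cobounded.2 hf
  refine (hnorm.atTop_mul_pos huw (hu.inner hg)).congr' ?_
  filter_upwards [hnorm.eventually_gt_atTop 0] with i hi
  rw [real_inner_smul_left, mul_inv_cancel_left₀ hi.ne']

theorem inner_nonpos_of_eventually_inner_le [l.NeBot] {h : ι → ℝ} {c : ℝ}
    (hf : Tendsto f l (cobounded W)) (hu : Tendsto (fun i => ‖f i‖⁻¹ • f i) l (𝓝 u))
    (hg : Tendsto g l (𝓝 w)) (hh : Tendsto h l (𝓝 c)) (hle : ∀ᶠ i in l, ⟪f i, g i⟫ ≤ h i) :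
    ⟪u, w⟫ ≤ 0 := by
  by_contra! huw
  exact not_tendsto_atTop_of_tendsto_nhds hh
    (tendsto_atTop_mono' l hle (tendsto_inner_atTop_of_inner_pos hf hu hg huw))

theorem tendsto_cobounded_of_tendsto_inner_atTop (hg : Tendsto g l (𝓝 w))
    (hfg : Tendsto (fun i => ⟪f i, g i⟫) l atTop) : Tendsto f l (cobounded W) := by
  have hpos : 0 < ‖w‖ + 1 := by positivity
  rw [← tendsto_norm_atTop_iff_cobounded, ← tendsto_mul_const_atTop_of_pos hpos]
  refine tendsto_atTop_mono' l ?_ hfg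
  filter_upwards [hg.norm.eventually_lt_const (lt_add_one ‖w‖)] with i hi
  exact (real_inner_le_norm _ _).trans (by gcongr)

theorem eq_zero_of_inner_nonneg_of_forall_inner_add_nonpos {y u : W} (hyu : 0 ≤ ⟪y, u⟫)
    (hy : ∀ b, ⟪u, b⟫ = 0 → ⟪y, u + b⟫ ≤ 0) : y = 0 := by
  have hyu0 : ⟪y, u⟫ = 0 := le_antisymm (by simpa using hy 0 (inner_zero_right u)) hyu
  have hyy := hy y (by rw [real_inner_comm, hyu0])
  rw [inner_add_right, hyu0, zero_add] at hyy
  exact real_inner_self_nonpos.1 hyy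

end InnerLimits

section Horizontal

variable {W : Type*} [NormedAddCommGroup W] [InnerProductSpace ℝ W] {ω : W →L[ℝ] W →L[ℝ] ℝ}

/-- The point of the horizontal plane through `p` lying over `p.1 + w`, in the step-two group on
`W × ℝ` with law `(a, s) ∘ (b, t) = (a + b, s + t + ω a b)`; it is `p ∘ (w, 0)`. -/
def horizontalShift (ω : W →L[ℝ] W →L[ℝ] ℝ) (p : W × ℝ) (w : W) : W × ℝ :=
  (p.1 + w, p.2 + ω p.1 w)

theorem continuous_horizontalShift (ω : W →L[ℝ] W →L[ℝ] ℝ) :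
    Continuous fun q : (W × ℝ) × W => horizontalShift ω q.1 q.2 := by
  unfold horizontalShift
  fun_prop

theorem horizontalShift_horizontalShift_self (halt : ∀ a, ω a a = 0) (p : W × ℝ) (w : W) :
    horizontalShift ω (horizontalShift ω p w) w = horizontalShift ω p (w + w) := by
  simp [horizontalShift, halt, add_assoc]

theorem exists_tendsto_zero_eventually_mul_eq {X 𝕜 : Type*} [TopologicalSpace X] [Field 𝕜]
    [TopologicalSpace 𝕜] [IsTopologicalDivisionRing 𝕜] [T1Space 𝕜] {N D : X → 𝕜} {x₀ : X}
    (hN : ContinuousAt N x₀) (hD : ContinuousAt D x₀) (hN₀ : N x₀ = 0) (hD₀ : D x₀ ≠ 0) :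
    ∃ s : X → 𝕜, Tendsto s (𝓝 x₀) (𝓝 0) ∧ ∀ᶠ x in 𝓝 x₀, s x * D x = N x :=
  ⟨N / D, by simpa [ContinuousAt, hN₀] using hN.div hD hD₀,
    (hD.eventually_ne hD₀).mono fun x hx => div_mul_cancel₀ (N x) hx⟩

/- Move the intermediate point by `s • d`, where `ω d = ⟪w, ·⟫`: the equation for the heights is
then linear in `s`, with coefficient `2 ⟪w, w⟫` at `p₀`. -/
theorem exists_horizontalShift_horizontalShift_eq (halt : ∀ a, ω a a = 0)
    (hsurj : Function.Surjective ω) (p₀ : W × ℝ) {w : W} (hw : w ≠ 0) :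
    ∃ m k : W × ℝ → W, Tendsto m (𝓝 p₀) (𝓝 w) ∧ Tendsto k (𝓝 p₀) (𝓝 0) ∧
      ∀ᶠ p in 𝓝 p₀, ∀ b, ⟪w, b⟫ = 0 → horizontalShift ω (horizontalShift ω p (m p)) (w + b + k p) =
        horizontalShift ω (horizontalShift ω p₀ w) (w + b) := by
  have hanti : ∀ a b, ω a b = -ω b a := fun a b => by
    have h := halt (a + b)
    simp only [map_add, add_apply, halt, zero_add, add_zero] at h
    linarith
  obtain ⟨d, hd⟩ := hsurj (innerSL ℝ w)
  have hωd : ∀ a, ω a d = -⟪w, a⟫ := fun a => by rw [hanti, hd, innerSL_apply_apply]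
  have hdω : ∀ a, ω d a = ⟪w, a⟫ := fun a => by rw [hd, innerSL_apply_apply]
  obtain ⟨s, hs, hsD⟩ : ∃ s : W × ℝ → ℝ, Tendsto s (𝓝 p₀) (𝓝 0) ∧ ∀ᶠ p in 𝓝 p₀,
      s p * ⟪w, p₀.1 + w + w - p.1⟫ = p₀.2 - p.2 + ω (p₀.1 - p.1) (p₀.1 + w) := by
    refine exists_tendsto_zero_eventually_mul_eq (by fun_prop) (by fun_prop) (by simp) ?_
    simpa only [add_assoc, add_sub_cancel_left, inner_add_right, ← two_mul] using
      mul_ne_zero two_ne_zero (inner_self_ne_zero.2 hw)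
  refine ⟨fun p => p₀.1 + w + s p • d - p.1, fun p => -(s p • d), ?_, ?_, ?_⟩
  · simpa using ((hs.smul_const d).const_add (p₀.1 + w)).sub (continuous_fst.tendsto p₀)
  · simpa using (hs.smul_const d).neg
  · filter_upwards [hsD] with p hp b hb
    ext
    · simp only [horizontalShift]
      abel
    · simp only [inner_add_right, inner_sub_right, map_sub, map_add, sub_apply, halt] at hp
      simp only [horizontalShift, map_add, map_sub, map_neg, map_smul, add_apply, sub_apply,
        smul_apply, smul_eq_mul, halt, hωd, hdω, hb]
      linear_combination hp

/-- Monotonicity of `T : W × ℝ ⇉ W` along horizontal planes; for the symplectic form of the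
Heisenberg group this is H-monotonicity. -/
def IsHorizontallyMonotone (ω : W →L[ℝ] W →L[ℝ] ℝ) (T : W × ℝ → Set W) : Prop :=
  ∀ p w, ∀ v ∈ T p, ∀ z ∈ T (horizontalShift ω p w), 0 ≤ ⟪z - v, w⟫

/-- Maximal monotonicity along horizontal planes, the counterpart for `ω` of maximal
H-monotonicity. -/
structure IsMaximalHorizontallyMonotone (ω : W →L[ℝ] W →L[ℝ] ℝ) (T : W × ℝ → Set W) : Prop where
  monotone : IsHorizontallyMonotone ω T
  mem_of_forall : ∀ p v, (∀ w, ∀ z ∈ T (horizontalShift ω p w), 0 ≤ ⟪z - v, w⟫) → v ∈ T p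

variable {T : W × ℝ → Set W}

theorem IsHorizontallyMonotone.exists_selection (hT : IsHorizontallyMonotone ω T)
    (halt : ∀ a, ω a a = 0) (hsurj : Function.Surjective ω) (hdom : ∀ p, (T p).Nonempty)
    (p : W × ℝ) {w : W} (hw : w ≠ 0) :
    ∃ m k z : W × ℝ → W, Tendsto m (𝓝 p) (𝓝 w) ∧ Tendsto k (𝓝 p) (𝓝 0) ∧
      (∀ q, z q ∈ T (horizontalShift ω q (m q))) ∧ ∀ᶠ q in 𝓝 p, ∀ b, ⟪w, b⟫ = 0 →
        ∀ v ∈ T (horizontalShift ω (horizontalShift ω p w) (w + b)),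
          0 ≤ ⟪v - z q, w + b + k q⟫ := by
  obtain ⟨m, k, hm, hk, hmk⟩ := exists_horizontalShift_horizontalShift_eq halt hsurj p hw
  choose z hz using fun q => hdom (horizontalShift ω q (m q))
  refine ⟨m, k, z, hm, hk, hz, hmk.mono fun q hq b hb v hv => ?_⟩
  exact hT _ _ _ (hz q) v (by rwa [hq b hb])

variable {ι : Type*} {U : Ultrafilter ι} {q : ι → W × ℝ} {v : ι → W} {p : W × ℝ}

theorem IsHorizontallyMonotone.not_tendsto_cobounded [FiniteDimensional ℝ W]
    (hT : IsHorizontallyMonotone ω T) (halt : ∀ a, ω a a = 0) (hsurj : Function.Surjective ω)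
    (hdom : ∀ p, (T p).Nonempty) (hq : Tendsto q U (𝓝 p)) (hv : ∀ᶠ i in U, v i ∈ T (q i)) :
    ¬Tendsto v U (Bornology.cobounded W) := by
  intro hvU
  obtain ⟨u, hu, hvu⟩ := exists_norm_eq_one_tendsto_inv_norm_smul hvU
  have hu0 : u ≠ 0 := norm_ne_zero_iff.1 (hu ▸ one_ne_zero)
  obtain ⟨m, k, z, hm, hk, hz, hzT⟩ := hT.exists_selection halt hsurj hdom p hu0
  have hmq : Tendsto (fun i => m (q i)) U (𝓝 u) := hm.comp hq
  have hzm : Tendsto (fun i => ⟪z (q i), m (q i)⟫) U atTop := by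
    refine tendsto_atTop_mono' _ ?_
      (tendsto_inner_atTop_of_inner_pos hvU hvu hmq (real_inner_self_pos.2 hu0))
    filter_upwards [hv] with i hi
    simpa only [inner_sub_left, sub_nonneg] using hT _ _ _ hi _ (hz (q i))
  have hzU : Tendsto (fun i => z (q i)) U (Bornology.cobounded W) :=
    tendsto_cobounded_of_tendsto_inner_atTop hmq hzm
  obtain ⟨y, hy, hzy⟩ := exists_norm_eq_one_tendsto_inv_norm_smul hzU
  have hyu : 0 ≤ ⟪y, u⟫ := by
    refine ge_of_tendsto (hzy.inner hmq) ((hzm.eventually_ge_atTop 0).mono fun i hi => ?_)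
    rw [real_inner_smul_left]
    exact mul_nonneg (inv_nonneg.2 (norm_nonneg _)) hi
  have hyub : ∀ b, ⟪u, b⟫ = 0 → ⟪y, u + b⟫ ≤ 0 := by
    intro b hb
    obtain ⟨v', hv'⟩ := hdom (horizontalShift ω (horizontalShift ω p u) (u + b))
    have hg : Tendsto (fun i => u + b + k (q i)) U (𝓝 (u + b)) := by
      simpa using (hk.comp hq).const_add (u + b)
    refine inner_nonpos_of_eventually_inner_le hzU hzy hg (tendsto_const_nhds.inner hg (x := v')) ?_
    filter_upwards [hq.eventually hzT] with i hi
    simpa only [inner_sub_left, sub_nonneg] using hi b hb v' hv'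
  rw [eq_zero_of_inner_nonneg_of_forall_inner_add_nonpos hyu hyub, norm_zero] at hy
  exact zero_ne_one hy

theorem IsHorizontallyMonotone.exists_eventually_norm_le [FiniteDimensional ℝ W]
    (hT : IsHorizontallyMonotone ω T) (halt : ∀ a, ω a a = 0) (hsurj : Function.Surjective ω)
    (hdom : ∀ p, (T p).Nonempty) (p : W × ℝ) : ∃ M, ∀ᶠ q in 𝓝 p, ∀ v ∈ T q, ‖v‖ ≤ M := by
  have hnotMem : ∀ᶠ x in 𝓝 p ×ˢ Bornology.cobounded W, x.2 ∉ T x.1 := by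
    by_contra hmem
    rw [not_eventually] at hmem
    simp only [not_not] at hmem
    have hneBot := frequently_iff_neBot.1 hmem
    obtain ⟨U, hU⟩ := Ultrafilter.exists_le (𝓝 p ×ˢ Bornology.cobounded W ⊓ 𝓟 {x | x.2 ∈ T x.1})
    obtain ⟨hU, hUT⟩ := le_inf_iff.1 hU
    exact hT.not_tendsto_cobounded halt hsurj hdom (tendsto_fst.mono_left hU)
      (le_principal_iff.1 hUT) (tendsto_snd.mono_left hU)
  obtain ⟨P, hP, Q, hQ, hPQ⟩ := eventually_prod_iff.1 hnotMem
  obtain ⟨M, -, hM⟩ := (hasBasis_cobounded_norm (E := W)).eventually_iff.1 hQ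
  exact ⟨M, hP.mono fun q hq v hv => le_of_not_ge fun hMv => hPQ hq (hM hMv) hv⟩

theorem IsMaximalHorizontallyMonotone.isClosed_graph [FiniteDimensional ℝ W]
    (hT : IsMaximalHorizontallyMonotone ω T) (halt : ∀ a, ω a a = 0)
    (hsurj : Function.Surjective ω) (hdom : ∀ p, (T p).Nonempty) :
    IsClosed {q : (W × ℝ) × W | q.2 ∈ T q.1} := by
  refine isClosed_iff_ultrafilter.2 fun ⟨p, x⟩ U hU hUT => hT.mem_of_forall p x fun w z' hz' => ?_
  obtain rfl | hw := eq_or_ne w 0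
  · simp
  have hfst : Tendsto Prod.fst (U : Filter ((W × ℝ) × W)) (𝓝 p) :=
    continuous_fst.continuousAt.mono_left hU
  have hsnd : Tendsto Prod.snd (U : Filter ((W × ℝ) × W)) (𝓝 x) :=
    continuous_snd.continuousAt.mono_left hU
  set h : W := (1 / 2 : ℝ) • w
  have hhw : h + h = w := by rw [← add_smul]; norm_num
  obtain ⟨m, k, z, hm, hk, hz, hzT⟩ := hT.monotone.exists_selection halt hsurj hdom p
    (w := h) (by simpa [h] using hw)
  obtain ⟨M, hM⟩ := hT.monotone.exists_eventually_norm_le halt hsurj hdom (horizontalShift ω p h)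
  have hshift : Tendsto (fun q => horizontalShift ω q (m q)) (𝓝 p) (𝓝 (horizontalShift ω p h)) :=
    ((continuous_horizontalShift ω).tendsto (p, h)).comp (tendsto_id.prodMk_nhds hm)
  obtain ⟨y, hy⟩ := exists_tendsto_of_eventually_norm_le (U := U) (f := fun q => z q.1)
    (hfst.eventually ((hshift.eventually hM).mono fun q hq => hq _ (hz q)))
  have hxy : 0 ≤ ⟪y - x, h⟫ := by
    refine ge_of_tendsto ((hy.sub hsnd).inner (hm.comp hfst)) ?_
    filter_upwards [hUT] with q hq
    exact hT.monotone _ _ _ hq _ (hz q.1)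
  have hyz' : 0 ≤ ⟪z' - y, h⟫ := by
    have hk' : Tendsto (fun q : (W × ℝ) × W => h + 0 + k q.1) U (𝓝 h) := by
      simpa using (hk.comp hfst).const_add h
    refine ge_of_tendsto ((tendsto_const_nhds.sub hy).inner hk') ?_
    filter_upwards [hfst.eventually hzT] with q hq
    exact hq 0 (inner_zero_right h) z'
      (by rwa [add_zero, horizontalShift_horizontalShift_self halt, hhw])
  calc 0 ≤ 2 * (⟪y - x, h⟫ + ⟪z' - y, h⟫) := by positivity
    _ = ⟪z' - x, w⟫ := by
      rw [← inner_add_left, add_comm, sub_add_sub_cancel, ← hhw, inner_add_right, two_mul]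

theorem IsMaximalHorizontallyMonotone.upperHemicontinuous [FiniteDimensional ℝ W]
    (hT : IsMaximalHorizontallyMonotone ω T) (halt : ∀ a, ω a a = 0)
    (hsurj : Function.Surjective ω) (hdom : ∀ p, (T p).Nonempty) : UpperHemicontinuous T := by
  refine upperHemicontinuous_of_isClosed_graph (hT.isClosed_graph halt hsurj hdom) fun p => ?_
  obtain ⟨M, hM⟩ := hT.monotone.exists_eventually_norm_le halt hsurj hdom p
  exact ⟨closedBall 0 M, isCompact_closedBall 0 M,
    hM.mono fun q hq v hv => mem_closedBall_zero_iff.2 (hq v hv)⟩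

theorem IsMaximalHorizontallyMonotone.convex (hT : IsMaximalHorizontallyMonotone ω T)
    (p : W × ℝ) : Convex ℝ (T p) := by
  intro v₁ hv₁ v₂ hv₂ a b ha hb hab
  refine hT.mem_of_forall p _ fun w z hz => ?_
  have h₁ := hT.monotone p w v₁ hv₁ z hz
  have h₂ := hT.monotone p w v₂ hv₂ z hz
  calc 0 ≤ a * ⟪z - v₁, w⟫ + b * ⟪z - v₂, w⟫ := by positivity
    _ = ⟪z - (a • v₁ + b • v₂), w⟫ := by
      simp only [inner_sub_left, inner_add_left, real_inner_smul_left]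
      linear_combination ⟪z, w⟫ * hab

theorem inner_sub_inv_smul_pos {c : ℝ} (hc : 0 < c) {v v₀ a y : W} (hv : 0 ≤ ⟪v - v₀, y⟫)
    (hy : ‖c • v₀ - a‖ < ‖y‖) : 0 < ⟪v - c⁻¹ • (a - y), y⟫ := by
  have hy0 : 0 < ‖y‖ := (norm_nonneg _).trans_lt hy
  have hcoercive : 0 < ⟪c • v₀ - a, y⟫ + ‖y‖ ^ 2 := by
    have hCS := neg_le_of_abs_le (abs_real_inner_le_norm (c • v₀ - a) y)
    have := mul_lt_mul_of_pos_right hy hy0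
    linarith [sq ‖y‖]
  have hsplit : ⟪v - c⁻¹ • (a - y), y⟫ =
      ⟪v - v₀, y⟫ + c⁻¹ * (⟪c • v₀ - a, y⟫ + ‖y‖ ^ 2) := by
    simp only [inner_sub_left, real_inner_smul_left, real_inner_self_eq_norm_sq]
    field_simp
    ring
  rw [hsplit]
  positivity

theorem maximal_HMonotone_surjective_general [FiniteDimensional ℝ W] (halt : ∀ a, ω a a = 0)
    (hsurj : Function.Surjective ω) (hT : IsMaximalHorizontallyMonotone ω T)
    (hdom : ∀ p, (T p).Nonempty) (p : W × ℝ) {c : ℝ} (hc : 0 < c) (x : W) :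
    ∃ w, ∃ v ∈ T (horizontalShift ω p w), x = p.1 + w + c • v := by
  obtain ⟨v₀, hv₀⟩ := hdom p
  have hshift : Continuous (horizontalShift ω p) :=
    (continuous_horizontalShift ω).comp (Continuous.prodMk_right p)
  obtain ⟨w, hw⟩ := exists_mem_of_inner_sub_pos (S := fun w => T (horizontalShift ω p w))
    (a := fun w => c⁻¹ • (x - p.1 - w))
    ((hT.upperHemicontinuous halt hsurj hdom).comp hshift) (by fun_prop)
    (fun w => (hT.isClosed_graph halt hsurj hdom).preimage (Continuous.prodMk_right _))
    (fun w => hT.convex _) (fun w => hdom _)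
    fun w hw v hv => inner_sub_inv_smul_pos hc (hT.monotone p w v₀ hv₀ v hv) hw
  exact ⟨w, _, hw, by rw [smul_inv_smul₀ hc.ne']; abel⟩

end Horizontal

section Heisenberg

variable {n : ℕ}

/-- The symplectic form on `V₁` that gives the vertical part of the Heisenberg group law. -/
def symplecticForm (n : ℕ) : V1 n →L[ℝ] V1 n →L[ℝ] ℝ :=
  let x : V1 n →L[ℝ] E n := WithLp.fstL 2 ℝ (E n) (E n)
  let y : V1 n →L[ℝ] E n := WithLp.sndL 2 ℝ (E n) (E n)
  (2 : ℝ) • ((innerSL ℝ).bilinearComp y x - (innerSL ℝ).bilinearComp x y)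

theorem symplecticForm_apply (a b : V1 n) :
    symplecticForm n a b = 2 * (⟪a.snd, b.fst⟫ - ⟪a.fst, b.snd⟫) :=
  rfl

theorem symplecticForm_self (a : V1 n) : symplecticForm n a a = 0 := by
  rw [symplecticForm_apply, real_inner_comm, sub_self, mul_zero]

theorem symplecticForm_surjective : Function.Surjective (symplecticForm n) := by
  intro f
  obtain ⟨w, rfl⟩ := (InnerProductSpace.toDual ℝ (V1 n)).surjective f
  refine ⟨(1 / 2 : ℝ) • WithLp.toLp 2 (-w.snd, w.fst), ?_⟩
  ext b
  simp [symplecticForm_apply, WithLp.prod_inner_apply]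

/-- `ℍⁿ` as `V₁ × ℝ`, so that the projection `ξ₁` becomes the first component. -/
def heisEquiv (n : ℕ) : V1 n × ℝ ≃ Heis n where
  toFun q := (q.1.fst, q.1.snd, q.2)
  invFun η := (xi1 η, η.2.2)
  left_inv _ := rfl
  right_inv _ := rfl

theorem xi1_heisEquiv (q : V1 n × ℝ) : xi1 (heisEquiv n q) = q.1 :=
  rfl

theorem heisEquiv_mem_Hplane {q q' : V1 n × ℝ} :
    heisEquiv n q' ∈ Hplane (heisEquiv n q) ↔ q'.2 = q.2 + symplecticForm n q.1 q'.1 :=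
  Iff.rfl

theorem Hplane_heisEquiv (q : V1 n × ℝ) : Hplane (heisEquiv n q) =
    range fun w => heisEquiv n (horizontalShift (symplecticForm n) q w) := by
  ext η
  obtain ⟨q', rfl⟩ := (heisEquiv n).surjective η
  rw [heisEquiv_mem_Hplane]
  constructor
  · intro h
    refine ⟨q'.1 - q.1, congrArg _ (Prod.ext (add_sub_cancel q.1 q'.1) ?_)⟩
    rw [h, horizontalShift, map_sub, symplecticForm_self, sub_zero]
  · rintro ⟨w, hw⟩
    rw [← (heisEquiv n).injective hw, horizontalShift, map_add, symplecticForm_self, zero_add]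

theorem IsMaximalHMonotone.isMaximalHorizontallyMonotone {T : Heis n → Set (V1 n)}
    (hT : IsMaximalHMonotone T) :
    IsMaximalHorizontallyMonotone (symplecticForm n) fun q => T (heisEquiv n q) := by
  have hmem : ∀ q w, heisEquiv n (horizontalShift (symplecticForm n) q w) ∈
      Hplane (heisEquiv n q) := fun q w => Hplane_heisEquiv q ▸ mem_range_self w
  have hinner : ∀ (q : V1 n × ℝ) (w v z : V1 n),
      ⟪v - z, xi1 (heisEquiv n q) - xi1 (heisEquiv n (horizontalShift (symplecticForm n) q w))⟫ =
        ⟪z - v, w⟫ := fun q w v z => by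
    simp only [xi1_heisEquiv, horizontalShift, sub_add_cancel_left, inner_neg_right]
    rw [← inner_neg_left, neg_sub]
  refine ⟨fun q w v hv z hz => ?_, fun q v hv => hT.2 _ _ ?_⟩
  · rw [← hinner q]
    exact hT.1 _ _ (hmem q w) v hv z hz
  · rw [Hplane_heisEquiv]
    rintro _ ⟨w, rfl⟩ z hz
    rw [hinner]
    exact hv w z hz

end Heisenberg

/-- Minty's theorem, direction i ⇒ ii: if T is maximal H-monotone with full domain, then
ξ₁ + λT restricted to every horizontal plane is surjective onto V₁. -/
theorem maximal_HMonotone_surjective {n : ℕ} (hn : 1 ≤ n)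
    (T : Heis n → Set (V1 n)) (hT : IsMaximalHMonotone T)
    (hdom : ∀ η, (T η).Nonempty) :
    ∀ η : Heis n, ∀ lam : ℝ, 0 < lam → ∀ p : V1 n,
      ∃ ζ ∈ Hplane η, ∃ v ∈ T ζ, p = xi1 ζ + lam • v := by
  intro η lam hlam p
  obtain ⟨q, rfl⟩ := (heisEquiv n).surjective η
  obtain ⟨w, v, hv, hp⟩ := maximal_HMonotone_surjective_general symplecticForm_self
    symplecticForm_surjective hT.isMaximalHorizontallyMonotone (fun _ => hdom _) q hlam p
  exact ⟨_, Hplane_heisEquiv q ▸ mem_range_self w, v, hv, hp⟩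
end
end

section
/- Let T : ℍⁿ ⇉ V₁ be an upper semicontinuous maximal H-monotone set-valued map with dom(T) = ℍⁿ. Then the graph of T is closed in ℍⁿ × ℝ²ⁿ, and for every compact set K ⊆ ℍⁿ (with respect to d_H) the image T(K) = ∪_{η∈K} T(η) is a compact subset of ℝ²ⁿ; in particular, T is locally bounded. -/
open scoped RealInnerProductSpace Pointwise

noncomputable section

/-- Upper semicontinuity of a set-valued map T : ℍⁿ ⇉ V₁, w.r.t. the Korányi–Cygan distance. -/
def IsUSC {n : ℕ} (T : Heis n → Set (V1 n)) : Prop :=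
  ∀ η : Heis n, ∀ ε > (0 : ℝ), ∃ δ > (0 : ℝ), ∀ η' : Heis n,
    dH η' η < δ → T η' ⊆ T η + Metric.ball (0 : V1 n) ε

/-!
H-monotonicity against a point of the horizontal plane of `η` lying over `ξ₁(η) + w` bounds
`⟪w, v⟫` above for all `v ∈ T(η)`. Every `w` occurs in this way, so `T(η)` is weakly bounded, hence
bounded by Banach–Steinhaus. Maximality exhibits `T(η)` as an intersection of closed half-spaces, so
`T(η)` is compact. For compact values, upper semicontinuity in the `ε`-`δ` sense gives upper
hemicontinuity, since every open neighbourhood of a compact set contains a thickening of it. A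
compact-valued upper hemicontinuous map has closed graph and sends compact sets to compact sets.
-/

open Set Filter Topology Bornology

section UpperHemicontinuous

variable {α β : Type*} [TopologicalSpace α] [TopologicalSpace β] {f : α → Set β}

theorem isClosed_graph_of_upperHemicontinuous [RegularSpace β] (hf : UpperHemicontinuous f)
    (hclosed : ∀ x, IsClosed (f x)) : IsClosed {p : α × β | p.2 ∈ f p.1} :=
  isClosed_iff_frequently.2 fun p hp =>
    (hf.upperHemicontinuousAt p.1).mem_of_tendsto (hclosed p.1)
      (continuous_fst.tendsto p) hp (continuous_snd.tendsto p)

theorem isCompact_biUnion_of_upperHemicontinuousOn {K : Set α} (hK : IsCompact K)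
    (hf : UpperHemicontinuousOn f K) (hcompact : ∀ x ∈ K, IsCompact (f x)) :
    IsCompact (⋃ x ∈ K, f x) := by
  refine isCompact_of_finite_subcover fun U hUo hU => ?_
  have hlocal : ∀ x ∈ K, ∃ t : Finset _, ∀ᶠ x' in 𝓝[K] x, f x' ⊆ ⋃ i ∈ t, U i := fun x hx => by
    obtain ⟨t, ht⟩ := (hcompact x hx).elim_finite_subcover U hUo
      ((subset_biUnion_of_mem hx).trans hU)
    exact ⟨t, hf.forall_isOpen x hx _ (isOpen_biUnion fun i _ => hUo i) ht⟩
  refine hK.induction_on (p := fun s => ∃ t : Finset _, ⋃ x ∈ s, f x ⊆ ⋃ i ∈ t, U i)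
    ⟨∅, by simp⟩ ?mono ?union ?nhds
  case mono =>
    exact fun s s' hss' ⟨t, ht⟩ => ⟨t, (biUnion_subset_biUnion_left hss').trans ht⟩
  case union =>
    classical
    rintro s s' ⟨t, ht⟩ ⟨t', ht'⟩
    refine ⟨t ∪ t', ?_⟩
    rw [biUnion_union, Finset.set_biUnion_union]
    exact union_subset_union ht ht'
  case nhds =>
    intro x hx
    obtain ⟨t, ht⟩ := hlocal x hx
    exact ⟨_, ht, t, iUnion₂_subset fun _ h => h⟩

end UpperHemicontinuous

theorem isBounded_of_forall_bddAbove_inner {F : Type*} [NormedAddCommGroup F]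
    [InnerProductSpace ℝ F] [CompleteSpace F] {s : Set F}
    (hs : ∀ w : F, BddAbove ((fun v => ⟪w, v⟫) '' s)) : IsBounded s := by
  have hpointwise : ∀ w : F, ∃ C, ∀ v : s, ‖innerSL ℝ (v : F) w‖ ≤ C := fun w => by
    obtain ⟨A, hA⟩ := hs w
    obtain ⟨B, hB⟩ := hs (-w)
    refine ⟨max A B, fun ⟨v, hv⟩ => abs_le'.2 ⟨?_, ?_⟩⟩
    · rw [innerSL_apply_apply, real_inner_comm]
      exact (hA (mem_image_of_mem _ hv)).trans (le_max_left A B)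
    · rw [innerSL_apply_apply, real_inner_comm, ← inner_neg_left]
      exact (hB (mem_image_of_mem _ hv)).trans (le_max_right A B)
  obtain ⟨C, hC⟩ := banach_steinhaus hpointwise
  exact isBounded_iff_forall_norm_le.2
    ⟨C, fun v hv => (innerSL_apply_norm ℝ v).symm.trans_le (hC ⟨v, hv⟩)⟩

section Heisenberg

variable {n : ℕ} {T : Heis n → Set (V1 n)}

theorem exists_mem_Hplane_xi1_eq (η : Heis n) (u : V1 n) : ∃ η' ∈ Hplane η, xi1 η' = u :=
  ⟨(u.fst, u.snd, η.2.2 + 2 * (⟪η.2.1, u.fst⟫ - ⟪η.1, u.snd⟫)), rfl, rfl⟩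

theorem dH_self (η : Heis n) : dH η η = 0 := by
  simp [dH, gaugeN, hmul, hinv]

theorem continuous_dH : Continuous fun p : Heis n × Heis n => dH p.1 p.2 := by
  unfold dH gaugeN hmul hinv
  exact Continuous.rpow_const (by fun_prop) fun _ => Or.inr (by norm_num)

theorem eventually_dH_lt (η : Heis n) {δ : ℝ} (hδ : 0 < δ) : ∀ᶠ η' in 𝓝 η, dH η' η < δ :=
  (continuous_dH.comp (Continuous.prodMk_left η)).continuousAt.eventually_lt continuousAt_const
    ((dH_self η).trans_lt hδ)

namespace IsHMonotone

theorem inner_le_inner (hT : IsHMonotone T) {η η' : Heis n} (hη' : η' ∈ Hplane η) {v v' : V1 n}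
    (hv : v ∈ T η) (hv' : v' ∈ T η') : ⟪xi1 η' - xi1 η, v⟫ ≤ ⟪xi1 η' - xi1 η, v'⟫ := by
  have hmono : 0 ≤ ⟪v - v', xi1 η - xi1 η'⟫ := hT η η' hη' v hv v' hv'
  rw [← neg_sub (xi1 η'), ← neg_sub v', inner_neg_neg, real_inner_comm, inner_sub_right] at hmono
  exact sub_nonneg.1 hmono

theorem isBounded (hT : IsHMonotone T) {η : Heis n}
    (hne : ∀ η' ∈ Hplane η, (T η').Nonempty) : IsBounded (T η) := by
  refine isBounded_of_forall_bddAbove_inner fun w => ?_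
  obtain ⟨η', hη', hw⟩ := exists_mem_Hplane_xi1_eq η (xi1 η + w)
  obtain ⟨v', hv'⟩ := hne η' hη'
  obtain rfl : xi1 η' - xi1 η = w := sub_eq_iff_eq_add'.2 hw
  exact ⟨⟪xi1 η' - xi1 η, v'⟫, forall_mem_image.2 fun v hv => hT.inner_le_inner hη' hv hv'⟩

end IsHMonotone

namespace IsMaximalHMonotone

theorem eq_biInter_halfSpace (hT : IsMaximalHMonotone T) (η : Heis n) :
    T η = ⋂ η' ∈ Hplane η, ⋂ v' ∈ T η', {v | 0 ≤ ⟪v - v', xi1 η - xi1 η'⟫} := by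
  ext v
  simp only [mem_iInter, mem_ofPred_eq]
  exact ⟨fun hv η' hη' v' hv' => hT.1 η η' hη' v hv v' hv', hT.2 η v⟩

theorem isClosed (hT : IsMaximalHMonotone T) (η : Heis n) : IsClosed (T η) := by
  rw [hT.eq_biInter_halfSpace η]
  exact isClosed_biInter fun η' _ => isClosed_biInter fun v' _ =>
    isClosed_le continuous_const (by fun_prop)

theorem isCompact (hT : IsMaximalHMonotone T) {η : Heis n}
    (hne : ∀ η' ∈ Hplane η, (T η').Nonempty) : IsCompact (T η) :=
  Metric.isCompact_of_isClosed_isBounded (hT.isClosed η) (hT.1.isBounded hne)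

end IsMaximalHMonotone

namespace IsUSC

theorem upperHemicontinuousAt (hT : IsUSC T) {η : Heis n} (hcompact : IsCompact (T η)) :
    UpperHemicontinuousAt T η := by
  refine .of_forall_isOpen fun u hu hTu => ?_
  obtain ⟨ε, hε, hthick⟩ := hcompact.exists_thickening_subset_open hu hTu
  obtain ⟨δ, hδ, hball⟩ := hT η ε hε
  filter_upwards [eventually_dH_lt η hδ] with η' hη'
  calc T η' ⊆ T η + Metric.ball 0 ε := hball η' hη'
    _ = Metric.thickening ε (T η) := add_ball_zero ε (T η)
    _ ⊆ u := hthick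

theorem exists_norm_le_of_dH_le (hT : IsUSC T) {η₀ : Heis n} (hbounded : IsBounded (T η₀)) :
    ∃ r > (0 : ℝ), ∃ M > (0 : ℝ), ∀ η, dH η η₀ ≤ r → ∀ v ∈ T η, ‖v‖ ≤ M := by
  obtain ⟨δ, hδ, hball⟩ := hT η₀ 1 one_pos
  obtain ⟨M, hM, hbound⟩ := (hbounded.add Metric.isBounded_ball).exists_pos_norm_le
  exact ⟨δ / 2, half_pos hδ, M, hM,
    fun η hη v hv => hbound v (hball η (hη.trans_lt (half_lt_self hδ)) hv)⟩

end IsUSC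

theorem usc_maximal_HMonotone_closed_compact_general
    (hcompact : ∀ η, IsCompact (T η)) (husc : IsUSC T) :
    IsClosed {p : Heis n × V1 n | p.2 ∈ T p.1} ∧
    (∀ K : Set (Heis n), IsCompact K → IsCompact (⋃ η ∈ K, T η)) ∧
    (∀ η₀ : Heis n, ∃ r > (0 : ℝ), ∃ M > (0 : ℝ),
      ∀ η : Heis n, dH η η₀ ≤ r → ∀ v ∈ T η, ‖v‖ ≤ M) := by
  have huhc : UpperHemicontinuous T := fun η => husc.upperHemicontinuousAt (hcompact η)
  exact ⟨isClosed_graph_of_upperHemicontinuous huhc fun η => (hcompact η).isClosed,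
    fun K hK => isCompact_biUnion_of_upperHemicontinuousOn hK (huhc.upperHemicontinuousOn K)
      fun η _ => hcompact η,
    fun η₀ => husc.exists_norm_le_of_dH_le (hcompact η₀).isBounded⟩

end Heisenberg

/-- Corollary 2.5: a usc maximal H-monotone map with full domain has closed graph,
maps compact sets to compact sets, and is in particular locally bounded. -/
theorem usc_maximal_HMonotone_closed_compact {n : ℕ} (hn : 1 ≤ n)
    (T : Heis n → Set (V1 n)) (hT : IsMaximalHMonotone T)
    (hdom : ∀ η, (T η).Nonempty) (husc : IsUSC T) :
    IsClosed {p : Heis n × V1 n | p.2 ∈ T p.1} ∧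
    (∀ K : Set (Heis n), IsCompact K → IsCompact (⋃ η ∈ K, T η)) ∧
    (∀ η₀ : Heis n, ∃ r > (0 : ℝ), ∃ M > (0 : ℝ),
      ∀ η : Heis n, dH η η₀ ≤ r → ∀ v ∈ T η, ‖v‖ ≤ M) :=
  usc_maximal_HMonotone_closed_compact_general
    (fun _ => hT.isCompact fun η' _ => hdom η') husc
end
end
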